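/- arXiv:2407.19122 — 3 statements merged into one kernel-verified Lean document; each statement's English description precedes it below -/
import Mathlib

section
/- Let R be a commutative integral domain, M an R-module, and Q : QuadraticForm R M an anisotropic quadratic form (Q m = 0 implies m = 0). Assume NoZeroSMulDivisors R (CliffordAlgebra Q). Then every nonzero element a of the multiplicative submonoid Submonoid.closure (Set.range (ι Q)) of CliffordAlgebra Q is neither a left nor a right zero divisor: for every b : CliffordAlgebra Q, a * b = 0 implies b = 0, and b * a = 0 implies b = 0. -/
theorem CliffordAlgebra.ι_mem_nonZeroDivisors {R M : Type*} [CommRing R]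
    [AddCommGroup M] [Module R M] (Q : QuadraticForm R M)
    [NoZeroSMulDivisors R (CliffordAlgebra Q)] {m : M} (hm : Q m ≠ 0) :
    CliffordAlgebra.ι Q m ∈ nonZeroDivisors (CliffordAlgebra Q) := by
  refine ⟨fun b hb => ?_, fun b hb => ?_⟩
  · have h : Q m • b = 0 := by
      rw [Algebra.smul_def, ← CliffordAlgebra.ι_sq_scalar, mul_assoc, hb, mul_zero]
    exact (eq_zero_or_eq_zero_of_smul_eq_zero h).resolve_left hm
  · have h : Q m • b = 0 := by
      rw [Algebra.smul_def, Algebra.commutes, ← CliffordAlgebra.ι_sq_scalar, ← mul_assoc, hb,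
        zero_mul]
    exact (eq_zero_or_eq_zero_of_smul_eq_zero h).resolve_left hm

theorem clifford_monoid_no_zero_divisors {R M : Type*} [CommRing R] [IsDomain R]
    [AddCommGroup M] [Module R M]
    (Q : QuadraticForm R M) (hQ : ∀ m : M, Q m = 0 → m = 0)
    [NoZeroSMulDivisors R (CliffordAlgebra Q)]
    (a : CliffordAlgebra Q)
    (ha : a ∈ Submonoid.closure (Set.range (CliffordAlgebra.ι Q)))
    (ha0 : a ≠ 0) :
    ∀ b : CliffordAlgebra Q, (a * b = 0 → b = 0) ∧ (b * a = 0 → b = 0) := by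
  have key : a ∈ nonZeroDivisors (CliffordAlgebra Q) := by
    induction ha using Submonoid.closure_induction with
    | mem x hx =>
      obtain ⟨m, rfl⟩ := hx
      refine CliffordAlgebra.ι_mem_nonZeroDivisors Q fun h => ha0 ?_
      rw [hQ m h, map_zero]
    | one => exact one_mem _
    | mul x y _ _ ihx ihy =>
      exact mul_mem (ihx (left_ne_zero_of_mul ha0)) (ihy (right_ne_zero_of_mul ha0))
  exact fun b => ⟨key.1 b, key.2 b⟩
end

section
/- Let M be a real vector space, Q : QuadraticForm ℝ M a negative definite quadratic form (Q m < 0 for every m ≠ 0), and let Vec := LinearMap.range (Algebra.linearMap ℝ (CliffordAlgebra Q)) ⊔ LinearMap.range (ι Q) be the submodule of Clifford vectors. For all a, c in the multiplicative submonoid Submonoid.closure (Set.range (ι Q)) of CliffordAlgebra Q with c ≠ 0 (so that c is invertible), one has reverse a * c ∈ Vec if and only if a * Ring.inverse c ∈ Vec. -/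
namespace CliffordAlgebra

/-- The submodule of Clifford vectors (paravectors): sums of a scalar and a vector. -/
abbrev paravectors {M : Type*} [AddCommGroup M] [Module ℝ M] (Q : QuadraticForm ℝ M) :
    Submodule ℝ (CliffordAlgebra Q) :=
  LinearMap.range (Algebra.linearMap ℝ (CliffordAlgebra Q)) ⊔ LinearMap.range (ι Q)

variable {M : Type*} [AddCommGroup M] [Module ℝ M] {Q : QuadraticForm ℝ M}

theorem reverse_eq_self_of_mem_paravectors {v : CliffordAlgebra Q} (hv : v ∈ paravectors Q) :
    reverse v = v := by
  obtain ⟨_, ⟨r, rfl⟩, _, ⟨m, rfl⟩, rfl⟩ := Submodule.mem_sup.mp hv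
  simp

theorem ι_mul_mul_ι_mem_paravectors (m : M) {v : CliffordAlgebra Q} (hv : v ∈ paravectors Q) :
    ι Q m * v * ι Q m ∈ paravectors Q := by
  obtain ⟨_, ⟨r, rfl⟩, _, ⟨n, rfl⟩, rfl⟩ := Submodule.mem_sup.mp hv
  refine Submodule.mem_sup.mpr ⟨_, ⟨r * Q m, rfl⟩, _, ⟨_, (ι_mul_ι_mul_ι m n).symm⟩, ?_⟩
  rw [mul_add, add_mul, Algebra.linearMap_apply, Algebra.linearMap_apply, ← Algebra.commutes,
    mul_assoc (algebraMap ℝ _ r), ι_sq_scalar, map_mul]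

theorem mul_mul_reverse_mem_paravectors {c : CliffordAlgebra Q}
    (hc : c ∈ Submonoid.closure (Set.range (ι Q))) {v : CliffordAlgebra Q}
    (hv : v ∈ paravectors Q) : c * v * reverse c ∈ paravectors Q := by
  induction hc using Submonoid.closure_induction generalizing v with
  | mem x hx =>
    obtain ⟨m, rfl⟩ := hx
    simpa using ι_mul_mul_ι_mem_paravectors m hv
  | one => simpa using hv
  | mul x y _ _ hx hy => simpa [mul_assoc] using hx (hy hv)

theorem reverse_mem_closure_range_ι {c : CliffordAlgebra Q}
    (hc : c ∈ Submonoid.closure (Set.range (ι Q))) :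
    reverse c ∈ Submonoid.closure (Set.range (ι Q)) := by
  induction hc using Submonoid.closure_induction with
  | mem x hx =>
    obtain ⟨m, rfl⟩ := hx
    simpa using Submonoid.subset_closure (Set.mem_range_self m)
  | one => simp
  | mul x y _ _ hx hy => simpa using mul_mem hy hx

/-- For an anisotropic form, a nonzero product of vectors has nonzero scalar norm. -/
theorem exists_reverse_mul_self_eq_algebraMap (hQ : Q.Anisotropic) {c : CliffordAlgebra Q}
    (hc : c ∈ Submonoid.closure (Set.range (ι Q))) (hc0 : c ≠ 0) :
    ∃ r : ℝ, r ≠ 0 ∧ reverse c * c = algebraMap ℝ _ r ∧ c * reverse c = algebraMap ℝ _ r := by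
  induction hc using Submonoid.closure_induction with
  | mem x hx =>
    obtain ⟨m, rfl⟩ := hx
    refine ⟨Q m, fun h => hc0 ?_, by simp, by simp⟩
    rw [hQ m h, map_zero]
  | one => exact ⟨1, by simp⟩
  | mul x y _ _ hx hy =>
    obtain ⟨r, hr, hr₁, hr₂⟩ := hx (left_ne_zero_of_mul hc0)
    obtain ⟨s, hs, hs₁, hs₂⟩ := hy (right_ne_zero_of_mul hc0)
    refine ⟨r * s, mul_ne_zero hr hs, ?_, ?_⟩
    · calc reverse (x * y) * (x * y) = reverse y * (reverse x * x) * y := by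
            simp only [reverse.map_mul, mul_assoc]
        _ = algebraMap ℝ _ (r * s) := by
            rw [hr₁, ← Algebra.commutes, mul_assoc, hs₁, map_mul]
    · calc x * y * reverse (x * y) = x * (y * reverse y) * reverse x := by
            simp only [reverse.map_mul, mul_assoc]
        _ = algebraMap ℝ _ (r * s) := by
            rw [hs₂, ← Algebra.commutes, mul_assoc, hr₂, mul_comm r, map_mul]

theorem mul_reverse_mem_paravectors {a c : CliffordAlgebra Q}
    (hc : c ∈ Submonoid.closure (Set.range (ι Q))) {r : ℝ} (hr : r ≠ 0)
    (hcr : c * reverse c = algebraMap ℝ _ r) (h : reverse a * c ∈ paravectors Q) :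
    a * reverse c ∈ paravectors Q := by
  have hw : reverse a * c = reverse c * a := by
    simpa using (reverse_eq_self_of_mem_paravectors h).symm
  have hmem := mul_mul_reverse_mem_paravectors hc h
  rwa [hw, ← mul_assoc, hcr, mul_assoc, ← Algebra.smul_def,
    Submodule.smul_mem_iff _ hr] at hmem

end CliffordAlgebra

theorem useful_lemma {M : Type*} [AddCommGroup M] [Module ℝ M]
    (Q : QuadraticForm ℝ M) (hQ : ∀ m : M, m ≠ 0 → Q m < 0)
    (a c : CliffordAlgebra Q)
    (ha : a ∈ Submonoid.closure (Set.range (CliffordAlgebra.ι Q)))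
    (hc : c ∈ Submonoid.closure (Set.range (CliffordAlgebra.ι Q)))
    (hc0 : c ≠ 0) :
    CliffordAlgebra.reverse a * c ∈
        LinearMap.range (Algebra.linearMap ℝ (CliffordAlgebra Q)) ⊔
          LinearMap.range (CliffordAlgebra.ι Q) ↔
      a * Ring.inverse c ∈
        LinearMap.range (Algebra.linearMap ℝ (CliffordAlgebra Q)) ⊔
          LinearMap.range (CliffordAlgebra.ι Q) := by
  have hQ' : Q.Anisotropic := fun m hm => by_contra fun h => (hQ m h).ne hm
  obtain ⟨r, hr, hr₁, hr₂⟩ :=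
    CliffordAlgebra.exists_reverse_mul_self_eq_algebraMap hQ' hc hc0
  have hinv : Ring.inverse c = r⁻¹ • CliffordAlgebra.reverse c := by
    refine Ring.inverse_unit (⟨c, r⁻¹ • CliffordAlgebra.reverse c, ?_, ?_⟩ :
      (CliffordAlgebra Q)ˣ)
    · rw [mul_smul_comm, hr₂, Algebra.smul_def, ← map_mul, inv_mul_cancel₀ hr, map_one]
    · rw [smul_mul_assoc, hr₁, Algebra.smul_def, ← map_mul, inv_mul_cancel₀ hr, map_one]
  rw [hinv, mul_smul_comm, Submodule.smul_mem_iff _ (inv_ne_zero hr)]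
  refine ⟨CliffordAlgebra.mul_reverse_mem_paravectors hc hr hr₂, fun h => ?_⟩
  simpa using CliffordAlgebra.mul_reverse_mem_paravectors (a := CliffordAlgebra.reverse a)
    (CliffordAlgebra.reverse_mem_closure_range_ι hc) hr (by simpa using hr₁) (by simpa using h)
end

section
/- Let R be a commutative ring, M an R-module, and Q : QuadraticForm R M. Let H : QuadraticForm R (R × R) satisfy H (y, z) = y * z for all (y, z), let N : QuadraticForm R R satisfy N t = -t^2 for all t, and set Q' := (Q.prod H).prod N. Then there exists an R-algebra isomorphism ψ from Matrix (Fin 2) (Fin 2) (CliffordAlgebra Q) onto the even subalgebra CliffordAlgebra.even Q' such that for all a, b, c, d : CliffordAlgebra Q, the image under ψ of the Clifford adjugate !![reverse d, -reverse b; -reverse c, reverse a] equals reverse (ψ !![a, b; c, d]) as elements of CliffordAlgebra Q'. -/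
open CliffordAlgebra

namespace BottPeriodicity

variable {R M : Type*} [CommRing R] [AddCommGroup M] [Module R M]

section MatrixUnits

variable {A B : Type*} [Ring A] [Ring B] [Algebra R A] [Algebra R B]

/-- The algebra map out of `2 × 2` matrices determined by an algebra map `j` on the coefficients
and elements `e`, `f`, commuting with the image of `j`, that multiply like the off-diagonal matrix
units. -/
def matrixLift (j : A →ₐ[R] B) (e f : B) (he : e * e = 0) (hf : f * f = 0)
    (hef : e * f + f * e = 1) (hje : ∀ a, Commute (j a) e) (hjf : ∀ a, Commute (j a) f) :
    Matrix (Fin 2) (Fin 2) A →ₐ[R] B :=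
  AlgHom.ofLinearMap
    { toFun := fun X => j (X 0 0) * (e * f) + j (X 0 1) * e + j (X 1 0) * f + j (X 1 1) * (f * e)
      map_add' := fun X Y => by
        simp only [Matrix.add_apply, map_add, add_mul]
        abel
      map_smul' := fun r X => by
        simp only [Matrix.smul_apply, map_smul, smul_mul_assoc, smul_add, RingHom.id_apply] }
    (by simp [hef])
    (fun X Y => by
      have hefe : e * (f * e) = e := by
        have h := congrArg (e * ·) hef
        simpa only [mul_add, ← mul_assoc, he, zero_mul, zero_add, mul_one] using h
      have hfef : f * (e * f) = f := by
        have h := congrArg (f * ·) hef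
        simpa only [mul_add, ← mul_assoc, hf, zero_mul, add_zero, mul_one] using h
      have he' (x : B) : e * (e * x) = 0 := by rw [← mul_assoc, he, zero_mul]
      have hf' (x : B) : f * (f * x) = 0 := by rw [← mul_assoc, hf, zero_mul]
      have hej (a : A) (x : B) : e * (j a * x) = j a * (e * x) := by
        rw [← mul_assoc, ← (hje a).eq, mul_assoc]
      have hfj (a : A) (x : B) : f * (j a * x) = j a * (f * x) := by
        rw [← mul_assoc, ← (hjf a).eq, mul_assoc]
      simp only [LinearMap.coe_mk, AddHom.coe_mk, Matrix.mul_apply, Fin.sum_univ_two, map_add,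
        map_mul, add_mul, mul_add, mul_assoc, hej, hfj, he, hf, he', hf', hefe, hfef, mul_zero]
      abel)

theorem matrixLift_apply (j : A →ₐ[R] B) (e f : B) (he : e * e = 0) (hf : f * f = 0)
    (hef : e * f + f * e = 1) (hje : ∀ a, Commute (j a) e) (hjf : ∀ a, Commute (j a) f)
    (X : Matrix (Fin 2) (Fin 2) A) :
    matrixLift j e f he hf hef hje hjf X =
      j (X 0 0) * (e * f) + j (X 0 1) * e + j (X 1 0) * f + j (X 1 1) * (f * e) :=
  rfl

end MatrixUnits

variable (Q : QuadraticForm R M)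

/-- The Clifford adjugate of a `2 × 2` matrix over a Clifford algebra. -/
def cliffordAdjugate (X : Matrix (Fin 2) (Fin 2) (CliffordAlgebra Q)) :
    Matrix (Fin 2) (Fin 2) (CliffordAlgebra Q) :=
  !![reverse (X 1 1), -reverse (X 0 1); -reverse (X 1 0), reverse (X 0 0)]

theorem cliffordAdjugate_add (X Y : Matrix (Fin 2) (Fin 2) (CliffordAlgebra Q)) :
    cliffordAdjugate Q (X + Y) = cliffordAdjugate Q X + cliffordAdjugate Q Y := by
  ext i j
  fin_cases i <;> fin_cases j <;> simp [cliffordAdjugate, add_comm]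

theorem cliffordAdjugate_mul (X Y : Matrix (Fin 2) (Fin 2) (CliffordAlgebra Q)) :
    cliffordAdjugate Q (X * Y) = cliffordAdjugate Q Y * cliffordAdjugate Q X := by
  ext i j
  fin_cases i <;> fin_cases j <;>
    simp [cliffordAdjugate, Matrix.mul_apply, Fin.sum_univ_two, add_comm]

theorem cliffordAdjugate_algebraMap (r : R) :
    cliffordAdjugate Q (algebraMap R _ r) = algebraMap R _ r := by
  ext i j
  fin_cases i <;> fin_cases j <;> simp [cliffordAdjugate, Matrix.algebraMap_matrix_apply]

/-- The matrix `(ι m, y; z, -ι m)` attached to a vector `(m, (y, z))`. -/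
def vectorMatrix : M × R × R →ₗ[R] Matrix (Fin 2) (Fin 2) (CliffordAlgebra Q) where
  toFun v := !![ι Q v.1, algebraMap R _ v.2.1; algebraMap R _ v.2.2, -ι Q v.1]
  map_add' v w := by
    ext i j
    fin_cases i <;> fin_cases j <;> simp [add_comm]
  map_smul' r v := by
    ext i j
    fin_cases i <;> fin_cases j <;> simp [Algebra.smul_def]

theorem vectorMatrix_apply (v : M × R × R) :
    vectorMatrix Q v = !![ι Q v.1, algebraMap R _ v.2.1; algebraMap R _ v.2.2, -ι Q v.1] :=
  rfl

variable {H : QuadraticForm R (R × R)} (hH : ∀ y z : R, H (y, z) = y * z)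

/-- The representation of the Clifford algebra of `Q ⊕ H` by `2 × 2` matrices. -/
def toMatrix : CliffordAlgebra (Q.prod H) →ₐ[R] Matrix (Fin 2) (Fin 2) (CliffordAlgebra Q) :=
  CliffordAlgebra.lift _ ⟨vectorMatrix Q, fun ⟨m, y, z⟩ => by
    ext i j
    fin_cases i <;> fin_cases j <;>
      simp [vectorMatrix_apply, Matrix.mul_apply, Fin.sum_univ_two, Matrix.algebraMap_matrix_apply,
        hH, ← Algebra.commutes y (ι Q m), ← Algebra.commutes z (ι Q m), add_comm,
        ← Algebra.commutes y (algebraMap R (CliffordAlgebra Q) z)]⟩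

@[simp]
theorem toMatrix_ι (v : M × R × R) : toMatrix Q hH (ι (Q.prod H) v) = vectorMatrix Q v :=
  CliffordAlgebra.lift_ι_apply _ _ _

theorem toMatrix_reverse_involute (x : CliffordAlgebra (Q.prod H)) :
    toMatrix Q hH (reverse (involute x)) = cliffordAdjugate Q (toMatrix Q hH x) := by
  induction x using CliffordAlgebra.induction with
  | algebraMap r => simp only [AlgHom.commutes, reverse.commutes, cliffordAdjugate_algebraMap]
  | ι v =>
    simp only [involute_ι, map_neg, reverse_ι, toMatrix_ι]
    ext i j
    fin_cases i <;> fin_cases j <;> simp [cliffordAdjugate, vectorMatrix_apply]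
  | mul x y hx hy => simp only [map_mul, reverse.map_mul, cliffordAdjugate_mul, hx, hy]
  | add x y hx hy => simp only [map_add, cliffordAdjugate_add, hx, hy]

variable (H)

/-- The first isotropic vector of the hyperbolic summand. -/
def e : CliffordAlgebra (Q.prod H) := ι _ (0, 1, 0)

/-- The second isotropic vector of the hyperbolic summand. -/
def f : CliffordAlgebra (Q.prod H) := ι _ (0, 0, 1)

/-- The bivector `e f - f e`. -/
def bivector : CliffordAlgebra (Q.prod H) := e Q H * f Q H - f Q H * e Q H

/-- A vector of the summand `M`, regarded in the Clifford algebra of `Q ⊕ H`. -/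
def inlι (m : M) : CliffordAlgebra (Q.prod H) := ι _ (m, 0, 0)

theorem inlι_mul_self (m : M) : inlι Q H m * inlι Q H m = algebraMap R _ (Q m) := by
  refine (ι_sq_scalar _ _).trans ?_
  simp [← Prod.zero_eq_mk]

theorem inlι_mul_e (m : M) : inlι Q H m * e Q H = -(e Q H * inlι Q H m) := by
  refine eq_neg_of_add_eq_zero_left ((ι_mul_ι_add_swap _ _).trans ?_)
  simp [QuadraticMap.polar, ← Prod.zero_eq_mk]

theorem inlι_mul_f (m : M) : inlι Q H m * f Q H = -(f Q H * inlι Q H m) := by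
  refine eq_neg_of_add_eq_zero_left ((ι_mul_ι_add_swap _ _).trans ?_)
  simp [QuadraticMap.polar, ← Prod.zero_eq_mk]

theorem inlι_commute_bivector (m : M) : Commute (inlι Q H m) (bivector Q H) := by
  have hef : Commute (inlι Q H m) (e Q H * f Q H) := by
    rw [Commute, SemiconjBy, ← mul_assoc, inlι_mul_e, neg_mul, mul_assoc, inlι_mul_f, mul_neg,
      neg_neg, mul_assoc]
  have hfe : Commute (inlι Q H m) (f Q H * e Q H) := by
    rw [Commute, SemiconjBy, ← mul_assoc, inlι_mul_f, neg_mul, mul_assoc, inlι_mul_e, mul_neg,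
      neg_neg, mul_assoc]
  exact hef.sub_right hfe

variable {H}

include hH

theorem e_mul_e : e Q H * e Q H = 0 :=
  (ι_sq_scalar _ _).trans (by simp [hH])

theorem f_mul_f : f Q H * f Q H = 0 :=
  (ι_sq_scalar _ _).trans (by simp [hH])

theorem e_mul_f_add_f_mul_e : e Q H * f Q H + f Q H * e Q H = 1 :=
  (ι_mul_ι_add_swap _ _).trans (by simp [QuadraticMap.polar, hH])

theorem e_mul_f_mul_e : e Q H * f Q H * e Q H = e Q H := by
  rw [eq_sub_of_add_eq (e_mul_f_add_f_mul_e Q hH), sub_mul, one_mul, mul_assoc, e_mul_e Q hH,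
    mul_zero, sub_zero]

theorem f_mul_e_mul_f : f Q H * e Q H * f Q H = f Q H := by
  rw [eq_sub_of_add_eq' (e_mul_f_add_f_mul_e Q hH), sub_mul, one_mul, mul_assoc, f_mul_f Q hH,
    mul_zero, sub_zero]

theorem bivector_mul_e : bivector Q H * e Q H = e Q H := by
  rw [bivector, sub_mul, e_mul_f_mul_e Q hH, mul_assoc, e_mul_e Q hH, mul_zero, sub_zero]

theorem e_mul_bivector : e Q H * bivector Q H = -e Q H := by
  rw [bivector, mul_sub, ← mul_assoc, ← mul_assoc, e_mul_f_mul_e Q hH, e_mul_e Q hH, zero_mul,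
    zero_sub]

theorem bivector_mul_f : bivector Q H * f Q H = -f Q H := by
  rw [bivector, sub_mul, f_mul_e_mul_f Q hH, mul_assoc, f_mul_f Q hH, mul_zero, zero_sub]

theorem f_mul_bivector : f Q H * bivector Q H = f Q H := by
  rw [bivector, mul_sub, ← mul_assoc, ← mul_assoc, f_mul_e_mul_f Q hH, f_mul_f Q hH, zero_mul,
    sub_zero]

theorem bivector_mul_self : bivector Q H * bivector Q H = 1 := by
  conv_lhs => enter [2]; rw [bivector]
  rw [mul_sub, ← mul_assoc, ← mul_assoc, bivector_mul_e Q hH, bivector_mul_f Q hH, neg_mul,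
    sub_neg_eq_add, e_mul_f_add_f_mul_e Q hH]

/-- The embedding of the Clifford algebra of `Q` into that of `Q ⊕ H` given on vectors by
multiplication with the bivector; its image centralises the hyperbolic summand. -/
def coeffHom : CliffordAlgebra Q →ₐ[R] CliffordAlgebra (Q.prod H) :=
  CliffordAlgebra.lift Q
    ⟨LinearMap.mulRight R (bivector Q H) ∘ₗ ι (Q.prod H) ∘ₗ LinearMap.inl R M (R × R), fun m => by
      change inlι Q H m * bivector Q H * (inlι Q H m * bivector Q H) = _
      rw [(inlι_commute_bivector Q H m).symm.mul_mul_mul_comm, inlι_mul_self,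
        bivector_mul_self Q hH, mul_one]⟩

theorem coeffHom_ι (m : M) : coeffHom Q hH (ι Q m) = inlι Q H m * bivector Q H :=
  CliffordAlgebra.lift_ι_apply _ _ _

theorem coeffHom_commute {x : CliffordAlgebra (Q.prod H)}
    (hx : ∀ m, Commute (inlι Q H m * bivector Q H) x) (a : CliffordAlgebra Q) :
    Commute (coeffHom Q hH a) x := by
  induction a using CliffordAlgebra.induction with
  | algebraMap r => rw [AlgHom.commutes]; exact Algebra.commutes r x
  | ι m => rw [coeffHom_ι]; exact hx m
  | mul a b ha hb => rw [map_mul]; exact ha.mul_left hb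
  | add a b ha hb => rw [map_add]; exact ha.add_left hb

theorem coeffHom_commute_e (a : CliffordAlgebra Q) : Commute (coeffHom Q hH a) (e Q H) :=
  coeffHom_commute Q hH (fun m => by
    rw [Commute, SemiconjBy, mul_assoc, bivector_mul_e Q hH, (inlι_commute_bivector Q H m).eq,
      ← mul_assoc, e_mul_bivector Q hH, neg_mul, inlι_mul_e]) a

theorem coeffHom_commute_f (a : CliffordAlgebra Q) : Commute (coeffHom Q hH a) (f Q H) :=
  coeffHom_commute Q hH (fun m => by
    rw [Commute, SemiconjBy, mul_assoc, bivector_mul_f Q hH, (inlι_commute_bivector Q H m).eq,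
      ← mul_assoc, f_mul_bivector Q hH, mul_neg, inlι_mul_f, neg_neg]) a

/-- The inverse of `toMatrix`. -/
def ofMatrix : Matrix (Fin 2) (Fin 2) (CliffordAlgebra Q) →ₐ[R] CliffordAlgebra (Q.prod H) :=
  matrixLift (coeffHom Q hH) (e Q H) (f Q H) (e_mul_e Q hH) (f_mul_f Q hH)
    (e_mul_f_add_f_mul_e Q hH) (coeffHom_commute_e Q hH) (coeffHom_commute_f Q hH)

theorem ofMatrix_comp_toMatrix : (ofMatrix Q hH).comp (toMatrix Q hH) = AlgHom.id R _ := by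
  refine CliffordAlgebra.hom_ext (LinearMap.ext fun ⟨m, y, z⟩ => ?_)
  have hv : ι (Q.prod H) (m, y, z) = inlι Q H m + y • e Q H + z • f Q H := by
    simp [inlι, e, f, ← map_smul, ← map_add]
  have hm : coeffHom Q hH (ι Q m) * (e Q H * f Q H) - coeffHom Q hH (ι Q m) * (f Q H * e Q H) =
      inlι Q H m := by
    rw [← mul_sub, coeffHom_ι, mul_assoc]
    exact (congrArg _ (bivector_mul_self Q hH)).trans (mul_one _)
  simp only [LinearMap.coe_comp, Function.comp_apply, AlgHom.toLinearMap_apply, AlgHom.comp_apply,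
    toMatrix_ι, AlgHom.id_apply, ofMatrix, matrixLift_apply, vectorMatrix_apply, Matrix.of_apply,
    Matrix.cons_val_zero, Matrix.cons_val_one, Matrix.cons_val', Matrix.cons_val_fin_one,
    AlgHom.commutes, ← Algebra.smul_def, map_neg, neg_mul]
  rw [hv, ← hm]
  abel

theorem toMatrix_e : toMatrix Q hH (e Q H) = !![0, 1; 0, 0] := by
  simp [e, vectorMatrix_apply]

theorem toMatrix_f : toMatrix Q hH (f Q H) = !![0, 0; 1, 0] := by
  simp [f, vectorMatrix_apply]

theorem toMatrix_coeffHom (a : CliffordAlgebra Q) :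
    toMatrix Q hH (coeffHom Q hH a) = Matrix.scalar (Fin 2) a := by
  induction a using CliffordAlgebra.induction with
  | algebraMap r => simp only [AlgHom.commutes]; rfl
  | ι m =>
    rw [coeffHom_ι, bivector, map_mul, map_sub, map_mul, map_mul, toMatrix_e, toMatrix_f, inlι,
      toMatrix_ι, vectorMatrix_apply]
    ext i j
    fin_cases i <;> fin_cases j <;> simp
  | mul a b ha hb => simp only [map_mul, ha, hb]
  | add a b ha hb => simp only [map_add, ha, hb]

theorem toMatrix_comp_ofMatrix : (toMatrix Q hH).comp (ofMatrix Q hH) = AlgHom.id R _ := by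
  ext X i j
  simp only [AlgHom.comp_apply, ofMatrix, matrixLift_apply, map_add, map_mul, toMatrix_coeffHom,
    toMatrix_e, toMatrix_f, AlgHom.id_apply]
  fin_cases i <;> fin_cases j <;> simp [Matrix.mul_apply, Fin.sum_univ_two]

/-- The Clifford algebra of `Q ⊕ H`, with `H` a hyperbolic plane, is the algebra of `2 × 2`
matrices over the Clifford algebra of `Q`. -/
def matrixEquiv : Matrix (Fin 2) (Fin 2) (CliffordAlgebra Q) ≃ₐ[R] CliffordAlgebra (Q.prod H) :=
  AlgEquiv.ofAlgHom (ofMatrix Q hH) (toMatrix Q hH) (ofMatrix_comp_toMatrix Q hH)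
    (toMatrix_comp_ofMatrix Q hH)

theorem matrixEquiv_cliffordAdjugate (X : Matrix (Fin 2) (Fin 2) (CliffordAlgebra Q)) :
    matrixEquiv Q hH (cliffordAdjugate Q X) = reverse (involute (matrixEquiv Q hH X)) := by
  rw [← AlgEquiv.eq_symm_apply]
  refine Eq.symm ((toMatrix_reverse_involute Q hH _).trans ?_)
  exact congrArg _ ((matrixEquiv Q hH).symm_apply_apply X)

end BottPeriodicity

theorem arithmetic_bott_periodicity {R M : Type*} [CommRing R] [AddCommGroup M] [Module R M]
    (Q : QuadraticForm R M)
    (H : QuadraticForm R (R × R)) (hH : ∀ y z : R, H (y, z) = y * z)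
    (N : QuadraticForm R R) (hN : ∀ t : R, N t = -t ^ 2) :
    ∃ ψ : Matrix (Fin 2) (Fin 2) (CliffordAlgebra Q) ≃ₐ[R]
        CliffordAlgebra.even ((Q.prod H).prod N),
      ∀ a b c d : CliffordAlgebra Q,
        (ψ !![CliffordAlgebra.reverse d, -CliffordAlgebra.reverse b;
              -CliffordAlgebra.reverse c, CliffordAlgebra.reverse a] :
            CliffordAlgebra ((Q.prod H).prod N)) =
          CliffordAlgebra.reverse
            ((ψ !![a, b; c, d] : CliffordAlgebra ((Q.prod H).prod N))) := by
  obtain rfl : N = -QuadraticMap.sq := by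
    ext t
    simp [hN, sq]
  refine ⟨(BottPeriodicity.matrixEquiv Q hH).trans (equivEven (Q.prod H)), fun a b c d => ?_⟩
  have h := BottPeriodicity.matrixEquiv_cliffordAdjugate Q hH !![a, b; c, d]
  refine Eq.trans ?_ (coe_toEven_reverse_involute (Q.prod H) _)
  exact congrArg (fun x => (toEven (Q.prod H) x).val) h
end
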